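/- arXiv:2404.11823 — 2 statements merged into one kernel-verified Lean document; each statement's English description precedes it below -/
import Mathlib

section
/- Let p be an odd prime, Γ a cyclic group of order p^r with r ≥ 2, generator σ, and R = ℤ_p[Γ]. Let N_Γ = Σ_{g∈Γ} g be the norm element. Suppose J is an ideal of R with (N_Γ) ⊆ J ⊆ R such that J is isomorphic as an R-module to the ideal (N_Γ, p^r). Then the p-adic valuation of the cardinality of R/J lies in the set {r, 2r, ..., pr} ∪ {pr+1, pr+2, ...}. -/
/-!
Choose a generator `σ` and send `X` to `σ - 1`. This presents `R = ℤ_p[Γ]` as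
`ℤ_p[X] / (X * P)`, where `P = Φ_p(X + 1) * ⋯ * Φ_{p ^ r}(X + 1)` maps to `N_Γ` and has constant
coefficient `p ^ r`.

The elements `x = σ - 1` and `N = N_Γ` are each other's annihilators and `x ∣ p ^ r - N`.
Hence an isomorphism from `(N, p ^ r) = (N, p ^ r - N)` onto `J` sends `N` to a multiple of `N`,
and `p ^ r - N` to a multiple `x * f` of `x`. As `N ∈ J`, this gives `J = (N, x * f)`, with `f`
regular modulo `N`. The index of `J` is then `|ℤ_p[X] / (P, X)| = p ^ r` times
`|ℤ_p[X] / (P, f)|`.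

The latter is the product of the indices `p ^ v_i(f)` over the Eisenstein factors of `P`, where
`v_i` is the valuation of the discrete valuation ring `ℤ_p[ζ_{p ^ i}]`. Since all these rings
have residue field `𝔽_p` and `p` has valuation at least `p - 1` in each, the minimum of `v_i(f)`
and `p - 1` can be read off `f` modulo `p`. So either all `v_i(f)` equal a common `l < p - 1`, and
the index of `J` is `p ^ (r * (l + 1))`, or all are at least `p - 1`, and the exponent is at least
`p * r`.
-/

open Polynomial IsLocalRing

section Index

variable {S : Type*} [CommRing S]

theorem natCard_quotient_span_pair_mul {a b c : S} (hb : ∀ z, c ∣ b * z → c ∣ z) :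
    Nat.card (S ⧸ Ideal.span {a * b, c}) =
      Nat.card (S ⧸ Ideal.span {a, c}) * Nat.card (S ⧸ Ideal.span {b, c}) := by
  set I : Ideal S := Ideal.span {a * b, c} with hI
  have hle : I ≤ Ideal.span {b, c} := by
    refine Ideal.span_le.2 (Set.pair_subset ?_ (Ideal.mem_span_pair.2 ⟨0, 1, by ring⟩))
    exact Ideal.mem_span_pair.2 ⟨a, 0, by ring⟩
  let mulB : S →ₗ[S] S ⧸ I := I.mkQ ∘ₗ LinearMap.mulLeft S b
  have hker : LinearMap.ker mulB = Ideal.span {a, c} := by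
    ext z
    change I.mkQ (b * z) = 0 ↔ z ∈ Ideal.span {a, c}
    rw [Submodule.mkQ_apply, Submodule.Quotient.mk_eq_zero, hI, Ideal.mem_span_pair,
      Ideal.mem_span_pair]
    constructor
    · rintro ⟨u, v, huv⟩
      obtain ⟨w, hw⟩ := hb (z - u * a) ⟨v, by linear_combination -huv⟩
      exact ⟨u, w, by linear_combination -hw⟩
    · rintro ⟨u, v, rfl⟩
      exact ⟨u, b * v, by ring⟩
  have hrange : LinearMap.range mulB = Submodule.map I.mkQ (Ideal.span {b, c}) := by
    apply le_antisymm
    · rintro _ ⟨z, rfl⟩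
      exact Submodule.mem_map_of_mem (Ideal.mem_span_pair.2 ⟨z, 0, by simp [mul_comm]⟩)
    · rintro _ ⟨y, hy, rfl⟩
      obtain ⟨u, v, rfl⟩ := Ideal.mem_span_pair.1 hy
      refine ⟨u, (Submodule.Quotient.eq I).2 (Ideal.mem_span_pair.2 ⟨0, -v, ?_⟩)⟩
      simp only [LinearMap.mulLeft_apply]
      ring
  rw [← Submodule.card_quotient_mul_card_quotient _ _ hle, ← hrange, ← hker]
  exact congrArg (· * _) (Nat.card_congr mulB.quotKerEquivRange.toEquiv).symm

theorem natCard_quotient_span_prod_pair [IsDomain S] {ι : Type*} {s : Finset ι} {E : ι → S} {f : S}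
    (hE : ∀ i ∈ s, Prime (E i)) (hf : ∀ i ∈ s, ¬ E i ∣ f) :
    Nat.card (S ⧸ Ideal.span {∏ i ∈ s, E i, f}) =
      ∏ i ∈ s, Nat.card (S ⧸ Ideal.span {E i, f}) := by
  classical
  induction s using Finset.induction_on with
  | empty =>
    have htop : Ideal.span {1, f} = (⊤ : Ideal S) :=
      (Ideal.eq_top_iff_one _).2 (Ideal.subset_span (Set.mem_insert _ _))
    simp [htop]
  | insert j s hj ih =>
    rw [Finset.forall_mem_insert] at hE hf
    rw [Finset.prod_insert hj, Finset.prod_insert hj, mul_comm, natCard_quotient_span_pair_mul,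
      ih hE.2 hf.2, mul_comm]
    rintro z ⟨v, hv⟩
    obtain ⟨w, rfl⟩ := (hE.1.dvd_or_dvd (Dvd.intro _ hv)).resolve_left hf.1
    exact ⟨w, mul_left_cancel₀ hE.1.ne_zero (by linear_combination hv)⟩

theorem natCard_quotient_map_of_ker_le {T : Type*} [CommRing T] {φ : S →+* T}
    (hφ : Function.Surjective φ) {I : Ideal S} (hI : RingHom.ker φ ≤ I) :
    Nat.card (T ⧸ I.map φ) = Nat.card (S ⧸ I) := by
  let ψ : S →+* T ⧸ I.map φ := (Ideal.Quotient.mk (I.map φ)).comp φ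
  have hψ : Function.Surjective ψ := Ideal.Quotient.mk_surjective.comp hφ
  have hker : RingHom.ker ψ = I := by
    rw [← RingHom.comap_ker, Ideal.mk_ker, Ideal.comap_map_of_surjective' φ hφ, sup_eq_left.2 hI]
  rw [← Nat.card_congr (RingHom.quotientKerEquivOfSurjective hψ).toEquiv, hker]

theorem natCard_quotient_span_pair_X (f : S[X]) :
    Nat.card (S[X] ⧸ Ideal.span {f, X}) = Nat.card (S ⧸ Ideal.span {f.coeff 0}) := by
  have hker : RingHom.ker (constantCoeff (R := S)) ≤ Ideal.span {f, X} := by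
    rw [ker_constantCoeff]
    exact Ideal.span_mono (by simp)
  rw [← natCard_quotient_map_of_ker_le constantCoeff_surjective hker, Ideal.map_span,
    Set.image_pair]
  simp [Ideal.span_pair_comm (y := (0 : S))]

end Index

theorem not_dvd_of_forall_prod_dvd {S ι : Type*} [CommRing S] [IsDomain S] {s : Finset ι}
    {E : ι → S} {f : S} (hE : ∀ i ∈ s, Prime (E i))
    (hf : ∀ z, ∏ i ∈ s, E i ∣ f * z → ∏ i ∈ s, E i ∣ z) {i : ι} (hi : i ∈ s) : ¬ E i ∣ f := by
  classical
  intro hdvd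
  have hprod := Finset.mul_prod_erase s E hi
  have hne : ∏ j ∈ s.erase i, E j ≠ 0 :=
    Finset.prod_ne_zero_iff.2 fun j hj => (hE j (Finset.mem_of_mem_erase hj)).ne_zero
  have h := hf _ (hprod ▸ mul_dvd_mul_right hdvd _)
  exact (hE i hi).not_isUnit (isUnit_of_dvd_one
    ((mul_dvd_mul_iff_right hne).1 (by rwa [hprod, one_mul])))

section Overideal

variable {R : Type*} [CommRing R] {x N m : R}

theorem mul_linearEquiv_eq_zero_iff {I J : Ideal R} (e : I ≃ₗ[R] J) {c : R} {a : I} :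
    c * (e a : R) = 0 ↔ c * (a : R) = 0 := by
  have h : c • e a = 0 ↔ c • a = 0 := by rw [← map_smul, map_eq_zero_iff e e.injective]
  simpa [Subtype.ext_iff] using h

theorem eq_span_pair_of_linearEquiv {I J : Ideal R} (e : I ≃ₗ[R] J) {u v : I}
    (hI : I = Ideal.span {(u : R), (v : R)}) : J = Ideal.span {(e u : R), (e v : R)} := by
  refine le_antisymm (fun y hy => ?_) (Ideal.span_le.2 (Set.pair_subset (e u).2 (e v).2))
  obtain ⟨c, d, hcd⟩ := Ideal.mem_span_pair.1 (hI.le (e.symm ⟨y, hy⟩).2)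
  have hy' : e (c • u + d • v) = ⟨y, hy⟩ := (e.eq_symm_apply).1 (Subtype.ext hcd)
  rw [map_add, map_smul, map_smul] at hy'
  exact Ideal.mem_span_pair.2 ⟨c, d, congrArg Subtype.val hy'⟩

theorem exists_eq_span_pair_of_linearEquiv (hx : ∀ z, x * z = 0 ↔ N ∣ z)
    (hN : ∀ z, N * z = 0 ↔ x ∣ z) (hm : m ∈ nonZeroDivisors R) (hxm : x ∣ m - N)
    {J : Ideal R} (hNJ : N ∈ J) (e : Ideal.span {N, m} ≃ₗ[R] J) :
    ∃ f, J = Ideal.span {N, x * f} ∧ ∀ z, N ∣ f * z → N ∣ z := by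
  have hspan : Ideal.span {N, m} = Ideal.span {N, m - N} := (Ideal.span_pair_sub_left _ _).symm
  let u : Ideal.span {N, m} := ⟨N, Ideal.subset_span (by simp)⟩
  let v : Ideal.span {N, m} := ⟨m - N, hspan ▸ Ideal.subset_span (by simp)⟩
  have hJ : J = Ideal.span {(e u : R), (e v : R)} := eq_span_pair_of_linearEquiv e hspan
  have hu : N ∣ (e u : R) := (hx _).1 ((mul_linearEquiv_eq_zero_iff e).2 ((hx N).2 dvd_rfl))
  obtain ⟨f, hf⟩ : x ∣ (e v : R) := (hN _).1 ((mul_linearEquiv_eq_zero_iff e).2 ((hN _).2 hxm))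
  refine ⟨f, le_antisymm ?_ ?_, fun z hz => ?_⟩
  · rw [hJ, hf]
    exact Ideal.span_le.2 (Set.pair_subset (Ideal.mem_of_dvd _ hu (Ideal.subset_span (by simp)))
      (Ideal.subset_span (by simp)))
  · rw [← hf]
    exact Ideal.span_le.2 (Set.pair_subset hNJ (e v).2)
  · have hzv : z * (e v : R) = 0 := by
      rw [hf]
      linear_combination (hx _).2 hz
    have hzm : z * (m - N) = 0 := (mul_linearEquiv_eq_zero_iff e).1 hzv
    refine (hx z).1 ((mul_right_mem_nonZeroDivisors_eq_zero_iff hm).1 ?_)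
    linear_combination x * hzm + z * (hx N).2 dvd_rfl

variable {S : Type*} [CommRing S] {φ : S →+* R}

theorem map_dvd_map_iff_of_ker_le (hφ : Function.Surjective φ) {P z : S}
    (hker : RingHom.ker φ ≤ Ideal.span {P}) : φ P ∣ φ z ↔ P ∣ z := by
  refine ⟨fun h => ?_, map_dvd φ⟩
  rw [← Ideal.mem_span_singleton] at h ⊢
  rwa [← Set.image_singleton, ← Ideal.map_span, ← Ideal.mem_comap,
    Ideal.comap_map_of_surjective' φ hφ, sup_eq_left.2 hker] at h

theorem map_mul_eq_zero_iff_dvd [IsDomain S] (hφ : Function.Surjective φ) {a b : S} (ha : a ≠ 0)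
    (hker : RingHom.ker φ = Ideal.span {a * b}) (w : R) : φ a * w = 0 ↔ φ b ∣ w := by
  obtain ⟨z, rfl⟩ := hφ w
  rw [map_dvd_map_iff_of_ker_le hφ (hker.trans_le (Ideal.span_singleton_le_span_singleton.2
    (dvd_mul_left b a))), ← map_mul, ← RingHom.mem_ker, hker, Ideal.mem_span_singleton,
    mul_dvd_mul_iff_left ha]

theorem exists_natCard_quotient_eq_mul [IsDomain S] (hφ : Function.Surjective φ) {x P : S}
    (hx : x ≠ 0) (hP : P ≠ 0) (hker : RingHom.ker φ = Ideal.span {x * P})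
    (hm : m ∈ nonZeroDivisors R) (hxm : φ x ∣ m - φ P) {J : Ideal R} (hPJ : φ P ∈ J)
    (e : Ideal.span {φ P, m} ≃ₗ[R] J) :
    ∃ f, (∀ z, P ∣ f * z → P ∣ z) ∧
      Nat.card (R ⧸ J) =
        Nat.card (S ⧸ Ideal.span {P, x}) * Nat.card (S ⧸ Ideal.span {P, f}) := by
  have hkerP : RingHom.ker φ ≤ Ideal.span {P} :=
    hker.trans_le (Ideal.span_singleton_le_span_singleton.2 (dvd_mul_left P x))
  obtain ⟨f', rfl, hreg⟩ := exists_eq_span_pair_of_linearEquiv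
    (map_mul_eq_zero_iff_dvd hφ hx hker)
    (map_mul_eq_zero_iff_dvd hφ hP (hker.trans (by rw [mul_comm]))) hm hxm hPJ e
  obtain ⟨f, rfl⟩ := hφ f'
  have hf : ∀ z, P ∣ f * z → P ∣ z := fun z hz => by
    rw [← map_dvd_map_iff_of_ker_le hφ hkerP] at hz ⊢
    exact hreg _ (map_mul φ f z ▸ hz)
  refine ⟨f, hf, ?_⟩
  have hmap : Ideal.span {φ P, φ x * φ f} = (Ideal.span {P, x * f}).map φ := by
    rw [Ideal.map_span, Set.image_pair, map_mul]
  rw [hmap, natCard_quotient_map_of_ker_le hφ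
    (hkerP.trans (Ideal.span_mono (by simp))), Ideal.span_pair_comm,
    natCard_quotient_span_pair_mul hf, Ideal.span_pair_comm, Ideal.span_pair_comm (x := f)]

end Overideal

theorem natCard_adjoinRoot_quotient_span {S : Type*} [CommRing S] (E f : S[X]) :
    Nat.card (AdjoinRoot E ⧸ Ideal.span {AdjoinRoot.mk E f}) =
      Nat.card (S[X] ⧸ Ideal.span {E, f}) := by
  have hker : RingHom.ker (AdjoinRoot.mk E) ≤ Ideal.span {E, f} := by
    intro g hg
    rw [RingHom.mem_ker, AdjoinRoot.mk_eq_zero] at hg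
    exact Ideal.mem_of_dvd _ hg (Ideal.subset_span (Set.mem_insert _ _))
  rw [← natCard_quotient_map_of_ker_le AdjoinRoot.mk_surjective hker, Ideal.map_span,
    Set.image_pair, AdjoinRoot.mk_self, Ideal.span_insert_zero]

theorem mk_eq_mul_root_add {R : Type*} [CommRing R] (E f : R[X]) :
    AdjoinRoot.mk E f = AdjoinRoot.mk E f.divX * AdjoinRoot.root E +
      algebraMap R (AdjoinRoot E) (f.coeff 0) := by
  conv_lhs => rw [← divX_mul_X_add f, map_add, map_mul, AdjoinRoot.mk_X, AdjoinRoot.mk_C]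
  rfl

theorem exists_natCard_quotient_span_eq_pow {A : Type*} [CommRing A] [IsDomain A]
    [IsDiscreteValuationRing A] {ϖ a : A} (hϖ : Irreducible ϖ) (ha : a ≠ 0) :
    ∃ m, Nat.card (A ⧸ Ideal.span {a}) = Nat.card (A ⧸ Ideal.span {ϖ}) ^ m ∧
      ∀ n, n ≤ m ↔ ϖ ^ n ∣ a := by
  obtain ⟨m, hm⟩ := IsDiscreteValuationRing.associated_pow_irreducible ha hϖ
  have hprime : (Ideal.span {ϖ}).IsPrime := (Ideal.span_singleton_prime hϖ.ne_zero).2 hϖ.prime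
  have hbot : Ideal.span {ϖ} ≠ ⊥ := by simpa using hϖ.ne_zero
  refine ⟨m, ?_, fun n => ?_⟩
  · rw [Ideal.span_singleton_eq_span_singleton.2 hm, ← Ideal.span_singleton_pow]
    exact cardQuot_pow_of_prime hbot
  · rw [hm.dvd_iff_dvd_right, pow_dvd_pow_iff hϖ.ne_zero hϖ.not_isUnit]

section Eisenstein

variable {O : Type*} [CommRing O] [IsLocalRing O] {E : O[X]}

theorem map_residue_eq_zero_iff {π : O} (hπ : Ideal.span {π} = maximalIdeal O) {f : O[X]} :
    f.map (residue O) = 0 ↔ C π ∣ f := by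
  simp [Polynomial.ext_iff, C_dvd_iff_dvd_coeff, residue_eq_zero_iff, ← hπ,
    Ideal.mem_span_singleton]

theorem root_mem_of_isMaximal (hE : E.IsDistinguishedAt (maximalIdeal O))
    (M : Ideal (AdjoinRoot E)) [hM : M.IsMaximal] : AdjoinRoot.root E ∈ M := by
  have := hE.monic.finite_adjoinRoot
  have hcomap : M.comap (algebraMap O (AdjoinRoot E)) = maximalIdeal O :=
    eq_maximalIdeal (Ideal.isMaximal_comap_of_isIntegral_of_isMaximal M)
  have : Nontrivial (AdjoinRoot E) :=
    (Ideal.Quotient.mk_surjective (I := M)).nontrivial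
  have hpow : AdjoinRoot.root E ^ E.natDegree ∈
      (maximalIdeal O).map (algebraMap O (AdjoinRoot E)) :=
    hE.pow_natDegree_le_of_aeval_zero_of_monic_mem_map (by simp) hE.monic _
      (hE.monic.natDegree_map _).le
  exact hM.isPrime.mem_of_pow_mem _ (Ideal.map_le_iff_le_comap.2 hcomap.ge hpow)

theorem isUnit_mk_of_isUnit_coeff_zero (hE : E.IsDistinguishedAt (maximalIdeal O)) {f : O[X]}
    (hf : IsUnit (f.coeff 0)) : IsUnit (AdjoinRoot.mk E f) := by
  by_contra hunit
  obtain ⟨M, hM, hfM⟩ := exists_max_ideal_of_mem_nonunits hunit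
  have hroot := M.mul_mem_left (AdjoinRoot.mk E f.divX) (root_mem_of_isMaximal hE M)
  rw [mk_eq_mul_root_add, Ideal.add_mem_iff_right _ hroot] at hfM
  exact hM.ne_top (Ideal.eq_top_of_isUnit_mem _ hfM (hf.map _))

theorem isLocalRing_adjoinRoot (hE : E.IsDistinguishedAt (maximalIdeal O))
    (hd : 0 < E.natDegree) : IsLocalRing (AdjoinRoot E) := by
  have : Nontrivial (AdjoinRoot E) := Ideal.Quotient.nontrivial_iff.2 <| by
    rw [Ne, Ideal.span_singleton_eq_top, hE.monic.isUnit_iff]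
    rintro rfl
    simp at hd
  refine of_isUnit_or_isUnit_one_sub_self fun a => ?_
  obtain ⟨f, rfl⟩ := AdjoinRoot.mk_surjective a
  rw [← map_one (AdjoinRoot.mk E), ← map_sub]
  refine (isUnit_or_isUnit_one_sub_self (f.coeff 0)).imp (isUnit_mk_of_isUnit_coeff_zero hE)
    fun h => isUnit_mk_of_isUnit_coeff_zero hE ?_
  simpa using h

end Eisenstein

section EisensteinDVR

variable {O : Type*} [CommRing O] [IsDomain O] [IsDiscreteValuationRing O] {E : O[X]}

theorem span_coeff_zero_eq_maximalIdeal (hE : E.IsEisensteinAt (maximalIdeal O))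
    (hd : 0 < E.natDegree) : Ideal.span {E.coeff 0} = maximalIdeal O := by
  obtain ⟨ϖ, hϖ⟩ := IsDiscreteValuationRing.exists_irreducible O
  have hmem := hE.mem hd
  have hnotMem := hE.notMem
  rw [hϖ.maximalIdeal_eq, Ideal.mem_span_singleton] at hmem
  rw [hϖ.maximalIdeal_eq, Ideal.span_singleton_pow, Ideal.mem_span_singleton] at hnotMem
  obtain ⟨u, hu⟩ := hmem
  have hunit : IsUnit u := by
    by_contra h
    have : u ∈ maximalIdeal O := h
    rw [hϖ.maximalIdeal_eq, Ideal.mem_span_singleton] at this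
    exact hnotMem (by rw [hu, sq]; exact mul_dvd_mul_left ϖ this)
  rw [hϖ.maximalIdeal_eq, hu, Ideal.span_singleton_mul_right_unit hunit]

theorem prime_of_isEisensteinAt (hE : E.IsEisensteinAt (maximalIdeal O)) (hm : E.Monic)
    (hd : 0 < E.natDegree) : Prime E :=
  (hE.irreducible inferInstance hm.isPrimitive hd).prime

theorem root_pow_natDegree_dvd (hE : E.IsEisensteinAt (maximalIdeal O)) (hm : E.Monic)
    (hd : 0 < E.natDegree) :
    AdjoinRoot.root E ^ E.natDegree ∣ algebraMap O (AdjoinRoot E) (E.coeff 0) := by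
  have hspan := span_coeff_zero_eq_maximalIdeal hE hd
  have hdist : E.IsDistinguishedAt (maximalIdeal O) := ⟨hE.isWeaklyEisensteinAt, hm⟩
  have hmap : E.map (residue O) = X ^ E.natDegree := hdist.map_eq_X_pow
  -- Write `E = X ^ d + π * c` with `π = E.coeff 0`; then `c` has constant coefficient `1`, so its
  -- class is a unit, and `π` is `-root ^ d` times the inverse of that unit.
  obtain ⟨c, hc⟩ : C (E.coeff 0) ∣ E - X ^ E.natDegree := by
    rw [← map_residue_eq_zero_iff hspan, Polynomial.map_sub, hmap]
    simp
  have hc0 : c.coeff 0 = 1 := by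
    have hne : E.coeff 0 ≠ 0 := fun h => hE.notMem (h ▸ zero_mem _)
    have h := congrArg (coeff · 0) hc
    simp only [coeff_sub, coeff_X_pow, if_neg hd.ne, sub_zero, coeff_C_mul] at h
    exact mul_left_cancel₀ hne (by rw [← h, mul_one])
  have hunit := isUnit_mk_of_isUnit_coeff_zero hdist (hc0 ▸ isUnit_one)
  have hroot : -AdjoinRoot.root E ^ E.natDegree =
      algebraMap O (AdjoinRoot E) (E.coeff 0) * AdjoinRoot.mk E c := by
    have h := congrArg (AdjoinRoot.mk E) hc
    simpa using h
  rw [← hunit.dvd_mul_right, ← hroot, dvd_neg]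

theorem maximalIdeal_adjoinRoot [IsLocalRing (AdjoinRoot E)]
    (hE : E.IsEisensteinAt (maximalIdeal O)) (hm : E.Monic) (hd : 0 < E.natDegree) :
    maximalIdeal (AdjoinRoot E) = Ideal.span {AdjoinRoot.root E} := by
  have hdist : E.IsDistinguishedAt (maximalIdeal O) := ⟨hE.isWeaklyEisensteinAt, hm⟩
  refine le_antisymm (fun a ha => ?_)
    ((Ideal.span_singleton_le_iff_mem _).2 (root_mem_of_isMaximal hdist _))
  obtain ⟨f, rfl⟩ := AdjoinRoot.mk_surjective a
  have hf : f.coeff 0 ∈ maximalIdeal O := fun h => ha (isUnit_mk_of_isUnit_coeff_zero hdist h)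
  rw [← span_coeff_zero_eq_maximalIdeal hE hd, Ideal.mem_span_singleton] at hf
  rw [Ideal.mem_span_singleton, mk_eq_mul_root_add]
  exact dvd_add (dvd_mul_left _ _) <| (dvd_pow_self _ hd.ne').trans <|
    (root_pow_natDegree_dvd hE hm hd).trans (map_dvd _ hf)

theorem isDiscreteValuationRing_adjoinRoot [IsDomain (AdjoinRoot E)]
    (hE : E.IsEisensteinAt (maximalIdeal O)) (hm : E.Monic) (hd : 0 < E.natDegree) :
    IsDiscreteValuationRing (AdjoinRoot E) := by
  have hdist : E.IsDistinguishedAt (maximalIdeal O) := ⟨hE.isWeaklyEisensteinAt, hm⟩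
  have := isLocalRing_adjoinRoot hdist hd
  have := hm.finite_adjoinRoot
  have hfield : ¬ IsField (AdjoinRoot E) := fun h =>
    IsDiscreteValuationRing.not_isField O <| isField_of_isIntegral_of_isField
      (AdjoinRoot.of.injective_of_degree_ne_zero (natDegree_pos_iff_degree_pos.1 hd).ne') h
  have hprincipal : (maximalIdeal (AdjoinRoot E)).IsPrincipal :=
    ⟨_, maximalIdeal_adjoinRoot hE hm hd⟩
  exact ((IsDiscreteValuationRing.TFAE _ hfield).out 0 4).2 hprincipal

theorem root_pow_dvd_mk_iff (hE : E.IsEisensteinAt (maximalIdeal O)) (hm : E.Monic)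
    (hd : 0 < E.natDegree) {n : ℕ} (hn : n ≤ E.natDegree) {f : O[X]} :
    AdjoinRoot.root E ^ n ∣ AdjoinRoot.mk E f ↔ X ^ n ∣ f.map (residue O) := by
  have hdist : E.IsDistinguishedAt (maximalIdeal O) := ⟨hE.isWeaklyEisensteinAt, hm⟩
  have hmap : E.map (residue O) = X ^ E.natDegree := hdist.map_eq_X_pow
  constructor
  · rintro ⟨a, ha⟩
    obtain ⟨g, rfl⟩ := AdjoinRoot.mk_surjective a
    rw [← AdjoinRoot.mk_X, ← map_pow, ← map_mul, AdjoinRoot.mk_eq_mk] at ha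
    have hdvd := (pow_dvd_pow X hn).trans (hmap ▸ Polynomial.map_dvd (residue O) ha)
    rw [Polynomial.map_sub, Polynomial.map_mul, Polynomial.map_pow, map_X] at hdvd
    exact (dvd_sub_left (dvd_mul_right _ _)).1 hdvd
  · rintro ⟨g, hg⟩
    obtain ⟨g, rfl⟩ := map_surjective _ residue_surjective g
    obtain ⟨h, hh⟩ : C (E.coeff 0) ∣ f - X ^ n * g := by
      rw [← map_residue_eq_zero_iff (span_coeff_zero_eq_maximalIdeal hE hd)]
      simp [hg]
    rw [eq_add_of_sub_eq' hh, map_add, map_mul, map_mul, map_pow, AdjoinRoot.mk_X]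
    exact dvd_add (dvd_mul_right _ _) <| ((pow_dvd_pow _ hn).trans
      (root_pow_natDegree_dvd hE hm hd)).mul_right _

theorem exists_natCard_quotient_span_pair_eq_pow (hE : E.IsEisensteinAt (maximalIdeal O))
    (hm : E.Monic) (hd : 0 < E.natDegree) {f : O[X]} (hf : ¬ E ∣ f) :
    ∃ m, Nat.card (O[X] ⧸ Ideal.span {E, f}) = Nat.card (ResidueField O) ^ m ∧
      ∀ n ≤ E.natDegree, n ≤ m ↔ X ^ n ∣ f.map (residue O) := by
  have := AdjoinRoot.isDomain_of_prime (prime_of_isEisensteinAt hE hm hd)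
  have := isDiscreteValuationRing_adjoinRoot hE hm hd
  have hroot : Irreducible (AdjoinRoot.root E) :=
    (IsDiscreteValuationRing.irreducible_iff_uniformizer _).2 (maximalIdeal_adjoinRoot hE hm hd)
  obtain ⟨m, hcard, hpow⟩ :=
    exists_natCard_quotient_span_eq_pow hroot (mt AdjoinRoot.mk_eq_zero.1 hf)
  refine ⟨m, ?_, fun n hn => (hpow n).trans (root_pow_dvd_mk_iff hE hm hd hn)⟩
  rw [← natCard_adjoinRoot_quotient_span, hcard, ← AdjoinRoot.mk_X,
    natCard_adjoinRoot_quotient_span, natCard_quotient_span_pair_X,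
    span_coeff_zero_eq_maximalIdeal hE hd]
  rfl

theorem natCard_quotient_span_prod_pair_eq_pow {ι : Type*} {s : Finset ι} {E : ι → O[X]}
    {f : O[X]} {d : ℕ} (hd : 0 < d) (hE : ∀ i ∈ s, (E i).IsEisensteinAt (maximalIdeal O))
    (hm : ∀ i ∈ s, (E i).Monic) (hdeg : ∀ i ∈ s, d ≤ (E i).natDegree)
    (hf : ∀ i ∈ s, ¬ E i ∣ f) :
    (∃ l < d, Nat.card (O[X] ⧸ Ideal.span {∏ i ∈ s, E i, f}) =
        Nat.card (ResidueField O) ^ (s.card * l)) ∨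
      ∃ m ≥ s.card * d, Nat.card (O[X] ⧸ Ideal.span {∏ i ∈ s, E i, f}) =
        Nat.card (ResidueField O) ^ m := by
  have hpos : ∀ i ∈ s, 0 < (E i).natDegree := fun i hi => hd.trans_le (hdeg i hi)
  choose! m hcard hpow using fun i hi =>
    exists_natCard_quotient_span_pair_eq_pow (hE i hi) (hm i hi) (hpos i hi) (hf i hi)
  rw [natCard_quotient_span_prod_pair
      (fun i hi => prime_of_isEisensteinAt (hE i hi) (hm i hi) (hpos i hi)) hf,
    Finset.prod_congr rfl hcard, Finset.prod_pow_eq_pow_sum]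
  by_cases hX : X ^ d ∣ f.map (residue O)
  · exact .inr ⟨_, Finset.card_nsmul_le_sum s m d fun i hi => (hpow i hi d (hdeg i hi)).2 hX, rfl⟩
  · -- Below `d`, each `m i` is read off the reduction of `f`, which does not depend on `i`.
    have hfin : FiniteMultiplicity X (f.map (residue O)) :=
      ⟨d, fun h => hX ((pow_dvd_pow X d.le_succ).trans h)⟩
    set l := multiplicity X (f.map (residue O))
    have hl : l < d := not_le.1 (mt hfin.pow_dvd_iff_le_multiplicity.2 hX)
    have hml : ∀ i ∈ s, m i = l := fun i hi => by
      have hle := hdeg i hi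
      have hiff : ∀ n ≤ d, n ≤ m i ↔ n ≤ l := fun n hn =>
        (hpow i hi n (hn.trans hle)).trans hfin.pow_dvd_iff_le_multiplicity
      have h₁ := (hiff l hl.le).2 le_rfl
      have h₂ := (hiff (l + 1) hl).not.2 l.lt_irrefl
      omega
    rw [Finset.sum_const_nat hml]
    exact .inl ⟨l, hl, rfl⟩

end EisensteinDVR

section Cyclotomic

/-- `Φ_{p ^ (i + 1)}(X + 1)`, the polynomial with roots `ζ - 1` for `ζ` a primitive
`p ^ (i + 1)`-th root of unity. -/
noncomputable def shiftedCyclotomic (R : Type*) [CommRing R] (p i : ℕ) : R[X] :=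
  (cyclotomic (p ^ (i + 1)) R).comp (X + 1)

variable {R : Type*} [CommRing R]

theorem map_shiftedCyclotomic {S : Type*} [CommRing S] (φ : R →+* S) (p i : ℕ) :
    (shiftedCyclotomic R p i).map φ = shiftedCyclotomic S p i := by
  simp [shiftedCyclotomic, Polynomial.map_comp]

theorem monic_shiftedCyclotomic (p i : ℕ) : (shiftedCyclotomic R p i).Monic := by
  simpa [shiftedCyclotomic] using (cyclotomic.monic (p ^ (i + 1)) R).comp_X_add_C 1

variable {p : ℕ} [hp : Fact p.Prime]

theorem natDegree_shiftedCyclotomic [Nontrivial R] (i : ℕ) :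
    (shiftedCyclotomic R p i).natDegree = p ^ i * (p - 1) := by
  rw [shiftedCyclotomic, ← C_1, natDegree_comp_eq_of_mul_ne_zero, natDegree_X_add_C, mul_one,
    natDegree_cyclotomic, Nat.totient_prime_pow_succ hp.out]
  simp [(cyclotomic.monic (p ^ (i + 1)) R).leadingCoeff, -map_one, leadingCoeff_X_add_C]

theorem coeff_zero_shiftedCyclotomic (i : ℕ) : (shiftedCyclotomic R p i).coeff 0 = p := by
  simp [shiftedCyclotomic, coeff_zero_eq_eval_zero, eval_one_cyclotomic_prime_pow]

theorem isEisensteinAt_shiftedCyclotomic (i : ℕ) :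
    (shiftedCyclotomic ℤ_[p] p i).IsEisensteinAt (maximalIdeal ℤ_[p]) := by
  refine (monic_shiftedCyclotomic p i).isEisensteinAt_of_mem_of_notMem
    (maximalIdeal.isMaximal _).ne_top (fun {n} hn => ?_) ?_
  · have hdvd : (p : ℤ) ∣ (shiftedCyclotomic ℤ p i).coeff n := by
      have h := (cyclotomic_prime_pow_comp_X_add_one_isEisensteinAt p i).mem (n := n)
      rw [Ideal.submodule_span_eq, Ideal.mem_span_singleton] at h
      exact h (by rwa [← shiftedCyclotomic, natDegree_shiftedCyclotomic,
        ← natDegree_shiftedCyclotomic (R := ℤ_[p])])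
    rw [PadicInt.maximalIdeal_eq_span_p, Ideal.mem_span_singleton,
      ← map_shiftedCyclotomic (Int.castRingHom ℤ_[p]), coeff_map]
    simpa using map_dvd (Int.castRingHom ℤ_[p]) hdvd
  · rw [coeff_zero_shiftedCyclotomic, PadicInt.maximalIdeal_eq_span_p, Ideal.span_singleton_pow,
      Ideal.mem_span_singleton, sq]
    exact fun h => PadicInt.prime_p.not_isUnit <|
      isUnit_of_dvd_one ((mul_dvd_mul_iff_left PadicInt.prime_p.ne_zero).1 (by simpa using h))

theorem prime_shiftedCyclotomic (i : ℕ) : Prime (shiftedCyclotomic ℤ_[p] p i) := by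
  refine prime_of_isEisensteinAt (isEisensteinAt_shiftedCyclotomic i)
    (monic_shiftedCyclotomic p i) ?_
  rw [natDegree_shiftedCyclotomic]
  exact Nat.mul_pos (pow_pos hp.out.pos i) (Nat.sub_pos_of_lt hp.out.one_lt)

theorem X_mul_prod_shiftedCyclotomic (r : ℕ) :
    X * ∏ i ∈ Finset.range r, shiftedCyclotomic R p i = (X + 1) ^ p ^ r - 1 := by
  induction r with
  | zero => simp
  | succ n ih =>
    have h := congrArg (comp · (X + 1)) (cyclotomic_prime_pow_mul_X_pow_sub_one R p n)
    simp only [mul_comp, sub_comp, pow_comp, X_comp, one_comp] at h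
    rw [Finset.prod_range_succ, ← mul_assoc, ih, ← h, mul_comm, shiftedCyclotomic]

theorem prod_shiftedCyclotomic_eq_geom_sum (r : ℕ) :
    ∏ i ∈ Finset.range r, shiftedCyclotomic R p i = ∑ k ∈ Finset.range (p ^ r), (X + 1) ^ k := by
  apply isRegular_X.left
  simp only [X_mul_prod_shiftedCyclotomic, ← mul_geom_sum, add_sub_cancel_right]

theorem coeff_zero_prod_shiftedCyclotomic (r : ℕ) :
    (∏ i ∈ Finset.range r, shiftedCyclotomic R p i).coeff 0 = p ^ r := by
  simp [coeff_zero_prod, coeff_zero_shiftedCyclotomic]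

end Cyclotomic

section CyclicGroupRing

open MonoidAlgebra

variable {k Γ : Type*} [CommRing k] [CommGroup Γ]

/-- The presentation of the group ring of a cyclic group with generator `s` as a quotient of a
polynomial ring, normalized so that `X` maps to `s - 1` and hence generates the augmentation
ideal. -/
noncomputable def aevalGeneratorSubOne (k : Type*) [CommRing k] (s : Γ) :
    k[X] →ₐ[k] MonoidAlgebra k Γ :=
  aeval (single s 1 - 1)

theorem aevalGeneratorSubOne_X_add_one_pow (s : Γ) (n : ℕ) :
    aevalGeneratorSubOne k s ((X + 1) ^ n) = single (s ^ n) 1 := by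
  simp [aevalGeneratorSubOne, single_pow]

theorem aevalGeneratorSubOne_surjective [Finite Γ] {s : Γ} (hs : ∀ g, g ∈ Subgroup.zpowers s) :
    Function.Surjective (aevalGeneratorSubOne k s) := by
  rw [← AlgHom.range_eq_top, eq_top_iff]
  rintro a -
  induction a using MonoidAlgebra.induction_on with
  | of g =>
    obtain ⟨n, rfl⟩ := mem_powers_iff_mem_zpowers.2 (hs g)
    exact ⟨(X + 1) ^ n, aevalGeneratorSubOne_X_add_one_pow s n⟩
  | add a b ha hb => exact add_mem ha hb
  | smul c a ha => exact Subalgebra.smul_mem _ ha c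

theorem aevalGeneratorSubOne_geom_sum [Fintype Γ] {s : Γ} (hs : ∀ g, g ∈ Subgroup.zpowers s) :
    aevalGeneratorSubOne k s (∑ n ∈ Finset.range (Fintype.card Γ), (X + 1) ^ n) =
      ∑ g : Γ, single g 1 := by
  classical
  simp only [map_sum, aevalGeneratorSubOne_X_add_one_pow]
  rw [← IsCyclic.image_range_card hs, Nat.card_eq_fintype_card, Finset.sum_image]
  rw [← Nat.card_eq_fintype_card, ← orderOf_eq_card_of_forall_mem_zpowers hs]
  exact fun a ha b hb => pow_injOn_Iio_orderOf (by simpa using ha) (by simpa using hb)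

theorem ker_eq_span_of_monic [Nontrivial k] {A : Type*} [CommRing A] [Algebra k A]
    [Module.Free k A] [Module.Finite k A] {φ : k[X] →ₐ[k] A} (hφ : Function.Surjective φ)
    {Q : k[X]} (hQ : Q.Monic) (hφQ : φ Q = 0) (hdeg : Q.natDegree ≤ Module.finrank k A) :
    RingHom.ker φ = Ideal.span {Q} := by
  have := hQ.free_quotient
  have := hQ.finite_quotient
  have hle : Ideal.span {Q} ≤ RingHom.ker φ := by
    rwa [Ideal.span_singleton_le_iff_mem, RingHom.mem_ker]
  let lift : (k[X] ⧸ Ideal.span {Q}) →ₐ[k] A := Ideal.Quotient.liftₐ _ φ hle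
  have hinj : Function.Injective lift :=
    (OrzechProperty.bijective_of_surjective_of_finrank_le lift.toLinearMap
      (Ideal.Quotient.lift_surjective_of_surjective _ hle hφ)
      ((finrank_quotient_span_eq_natDegree' hQ).trans_le hdeg)).injective
  refine le_antisymm (fun f hf => ?_) hle
  rw [← Ideal.Quotient.eq_zero_iff_mem, ← map_eq_zero_iff lift hinj]
  exact hf

theorem ker_aevalGeneratorSubOne [Nontrivial k] [Fintype Γ] {s : Γ}
    (hs : ∀ g, g ∈ Subgroup.zpowers s) :
    RingHom.ker (aevalGeneratorSubOne k s) = Ideal.span {(X + 1) ^ Fintype.card Γ - 1} := by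
  have hdeg : ((X + 1 : k[X]) ^ Fintype.card Γ).natDegree = Fintype.card Γ := by
    rw [← C_1, natDegree_pow_X_add_C]
  have hlt : (1 : k[X]).natDegree < ((X + 1 : k[X]) ^ Fintype.card Γ).natDegree := by
    rw [hdeg, natDegree_one]
    exact Fintype.card_pos
  refine ker_eq_span_of_monic (aevalGeneratorSubOne_surjective hs)
    (((monic_X_add_C 1).pow _).sub_of_left (degree_lt_degree hlt)) ?_ ?_
  · rw [map_sub, aevalGeneratorSubOne_X_add_one_pow, pow_card_eq_one, map_one, one_def, sub_self]
  · rw [natDegree_sub_eq_left_of_natDegree_lt hlt, hdeg,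
      Module.finrank_eq_card_basis (MonoidAlgebra.basis Γ k)]

end CyclicGroupRing

section PadicGroupRing

variable {p : ℕ} [Fact p.Prime]

theorem natCard_residueField_padicInt : Nat.card (ResidueField ℤ_[p]) = p := by
  rw [Nat.card_congr PadicInt.residueField.toEquiv, Nat.card_zmod]

theorem natCard_padicInt_quotient_span_pow (r : ℕ) :
    Nat.card (ℤ_[p] ⧸ Ideal.span {(p : ℤ_[p]) ^ r}) = p ^ r := by
  rw [← PadicInt.ker_toZModPow, Nat.card_congr (RingHom.quotientKerEquivOfSurjective
    (ZMod.ringHom_surjective (PadicInt.toZModPow r))).toEquiv, Nat.card_zmod]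

theorem natCast_pow_mem_nonZeroDivisors (Γ : Type*) [CommGroup Γ] (r : ℕ) :
    (p : MonoidAlgebra ℤ_[p] Γ) ^ r ∈ nonZeroDivisors (MonoidAlgebra ℤ_[p] Γ) := by
  rw [mem_nonZeroDivisors_iff_right]
  intro z hz
  have hsmul : (p : ℤ_[p]) ^ r • z = 0 := by
    rw [Algebra.smul_def, map_pow, map_natCast, mul_comm, hz]
  exact (smul_eq_zero.1 hsmul).resolve_left (pow_ne_zero _ PadicInt.prime_p.ne_zero)

theorem natCard_quotient_span_prod_shiftedCyclotomic_X (r : ℕ) :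
    Nat.card (ℤ_[p][X] ⧸ Ideal.span {∏ i ∈ Finset.range r, shiftedCyclotomic ℤ_[p] p i, X}) =
      p ^ r := by
  rw [natCard_quotient_span_pair_X, coeff_zero_prod_shiftedCyclotomic,
    natCard_padicInt_quotient_span_pow]

theorem natCard_quotient_span_prod_shiftedCyclotomic_pair {r : ℕ} {f : ℤ_[p][X]}
    (hf : ∀ i ∈ Finset.range r, ¬ shiftedCyclotomic ℤ_[p] p i ∣ f) :
    (∃ l < p - 1, Nat.card (ℤ_[p][X] ⧸
        Ideal.span {∏ i ∈ Finset.range r, shiftedCyclotomic ℤ_[p] p i, f}) = p ^ (r * l)) ∨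
      ∃ m ≥ r * (p - 1), Nat.card (ℤ_[p][X] ⧸
        Ideal.span {∏ i ∈ Finset.range r, shiftedCyclotomic ℤ_[p] p i, f}) = p ^ m := by
  have hp : p.Prime := Fact.out
  have hdeg (i : ℕ) : p - 1 ≤ (shiftedCyclotomic ℤ_[p] p i).natDegree := by
    rw [natDegree_shiftedCyclotomic]
    exact Nat.le_mul_of_pos_left _ (pow_pos hp.pos i)
  have h := natCard_quotient_span_prod_pair_eq_pow (Nat.sub_pos_of_lt hp.one_lt)
    (fun i _ => isEisensteinAt_shiftedCyclotomic i) (fun i _ => monic_shiftedCyclotomic p i)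
    (fun i _ => hdeg i) hf
  rwa [Finset.card_range, natCard_residueField_padicInt] at h

theorem exists_natCard_quotient_eq_prime_pow_mul {r : ℕ} {Γ : Type*} [CommGroup Γ] [Fintype Γ]
    [IsCyclic Γ] (hcard : Fintype.card Γ = p ^ r) {J : Ideal (MonoidAlgebra ℤ_[p] Γ)}
    (hJ : ∑ g : Γ, MonoidAlgebra.single g 1 ∈ J)
    (e : Ideal.span {∑ g : Γ, MonoidAlgebra.single g 1, (p : MonoidAlgebra ℤ_[p] Γ) ^ r}
      ≃ₗ[MonoidAlgebra ℤ_[p] Γ] J) :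
    ∃ f, (∀ i ∈ Finset.range r, ¬ shiftedCyclotomic ℤ_[p] p i ∣ f) ∧
      Nat.card (MonoidAlgebra ℤ_[p] Γ ⧸ J) = p ^ r * Nat.card (ℤ_[p][X] ⧸
        Ideal.span {∏ i ∈ Finset.range r, shiftedCyclotomic ℤ_[p] p i, f}) := by
  obtain ⟨s, hs⟩ := IsCyclic.exists_generator (α := Γ)
  set P : ℤ_[p][X] := ∏ i ∈ Finset.range r, shiftedCyclotomic ℤ_[p] p i with hPdef
  set φ := aevalGeneratorSubOne ℤ_[p] s
  have hφP : φ P = ∑ g : Γ, MonoidAlgebra.single g 1 := by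
    rw [hPdef, prod_shiftedCyclotomic_eq_geom_sum, ← hcard, aevalGeneratorSubOne_geom_sum hs]
  have hker : RingHom.ker φ = Ideal.span {X * P} := by
    rw [ker_aevalGeneratorSubOne hs, hcard, X_mul_prod_shiftedCyclotomic]
  have hP : P ≠ 0 := (monic_prod_of_monic _ _ fun i _ => monic_shiftedCyclotomic p i).ne_zero
  have hX : φ X ∣ (p : MonoidAlgebra ℤ_[p] Γ) ^ r - φ P := by
    have hdvd : X ∣ (p : ℤ_[p][X]) ^ r - P := X_dvd_iff.2 <| by
      rw [coeff_sub, coeff_zero_prod_shiftedCyclotomic]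
      simp [coeff_zero_eq_eval_zero]
    simpa using map_dvd φ hdvd
  rw [← hφP] at hJ e
  obtain ⟨f, hf, hindex⟩ := exists_natCard_quotient_eq_mul (φ := φ.toRingHom)
    (aevalGeneratorSubOne_surjective hs) X_ne_zero hP hker (natCast_pow_mem_nonZeroDivisors Γ r)
    hX hJ e
  exact ⟨f, fun i => not_dvd_of_forall_prod_dvd (fun i _ => prime_shiftedCyclotomic i) hf,
    hindex.trans (congrArg (· * _) (natCard_quotient_span_prod_shiftedCyclotomic_X r))⟩

end PadicGroupRing

theorem stmt0_general (p r : ℕ) [Fact p.Prime]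
    (Γ : Type*) [CommGroup Γ] [Fintype Γ] [IsCyclic Γ]
    (hcard : Fintype.card Γ = p ^ r)
    (N : MonoidAlgebra ℤ_[p] Γ) (hN : N = ∑ g : Γ, MonoidAlgebra.single g 1)
    (J : Ideal (MonoidAlgebra ℤ_[p] Γ))
    (hNJ : Ideal.span {N} ≤ J)
    (hiso : Nonempty (J ≃ₗ[MonoidAlgebra ℤ_[p] Γ]
      (Ideal.span {N, (p : MonoidAlgebra ℤ_[p] Γ) ^ r} : Ideal (MonoidAlgebra ℤ_[p] Γ)))) :
    (∃ k : ℕ, 1 ≤ k ∧ k ≤ p ∧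
        padicValNat p (Nat.card (MonoidAlgebra ℤ_[p] Γ ⧸ J)) = k * r) ∨
      p * r < padicValNat p (Nat.card (MonoidAlgebra ℤ_[p] Γ ⧸ J)) := by
  subst hN
  obtain ⟨e⟩ := hiso
  obtain ⟨q, rfl⟩ : ∃ q, p = q + 1 := Nat.exists_eq_add_one.2 (Fact.out : p.Prime).pos
  obtain ⟨f, hf, hindex⟩ := exists_natCard_quotient_eq_prime_pow_mul hcard
    ((Ideal.span_singleton_le_iff_mem J).1 hNJ) e.symm
  rcases natCard_quotient_span_prod_shiftedCyclotomic_pair hf with ⟨l, hl, hfl⟩ | ⟨m, hm, hfm⟩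
  · rw [hindex, hfl, ← pow_add, padicValNat.prime_pow]
    exact .inl ⟨l + 1, by lia, by lia, by ring⟩
  · rw [hindex, hfm, ← pow_add, padicValNat.prime_pow]
    rw [add_tsub_cancel_right] at hm
    rcases hm.eq_or_lt with rfl | hlt
    · exact .inl ⟨q + 1, by lia, le_rfl, by ring⟩
    · exact .inr (by linarith)

/-- Let p be an odd prime, Γ cyclic of order p^r with r ≥ 2,
R = ℤ_p[Γ], N_Γ the norm element. If J is an ideal with (N_Γ) ⊆ J ⊆ R and
J ≅ (N_Γ, p^r) as R-modules, then ord_p(#(R/J)) ∈ {r, 2r, ..., pr} ∪ {pr+1, ...}. -/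
theorem stmt0 (p r : ℕ) [Fact p.Prime] (hp : Odd p) (hr : 2 ≤ r)
    (Γ : Type) [CommGroup Γ] [Fintype Γ] [IsCyclic Γ]
    (hcard : Fintype.card Γ = p ^ r)
    (N : MonoidAlgebra ℤ_[p] Γ) (hN : N = ∑ g : Γ, MonoidAlgebra.single g 1)
    (J : Ideal (MonoidAlgebra ℤ_[p] Γ))
    (hNJ : Ideal.span {N} ≤ J)
    (hiso : Nonempty (J ≃ₗ[MonoidAlgebra ℤ_[p] Γ]
      (Ideal.span {N, (p : MonoidAlgebra ℤ_[p] Γ) ^ r} : Ideal (MonoidAlgebra ℤ_[p] Γ)))) :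
    (∃ k : ℕ, 1 ≤ k ∧ k ≤ p ∧
        padicValNat p (Nat.card (MonoidAlgebra ℤ_[p] Γ ⧸ J)) = k * r) ∨
      p * r < padicValNat p (Nat.card (MonoidAlgebra ℤ_[p] Γ ⧸ J)) := by
  exact stmt0_general p r Γ hcard N hN J hNJ hiso
end

section
/- Let Γ be a finite abelian group that is neither cyclic nor of prime-power order. Let S be the set of pairs (I, D) of subgroups I ⊆ D ⊆ Γ with I nontrivial elementary and D/I cyclic, let S′ = {(I,D) ∈ S : D is non-cyclic or #I is a prime power}, and let T be the set of tuples (p, H, I*, D*) with p prime, H ⊆ Γ a subgroup with Γ/H cyclic of order prime to p, and I* ⊆ D* ⊆ Γ_p subgroups with I* nontrivial and D*/I* cyclic. Then #S′ > #T. -/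
/-- The subgroup of elements of order coprime to `p`; the quotient by it is the
maximal p-quotient Γ_p of the finite abelian group Γ. -/
def primeToPart (Γ : Type) [CommGroup Γ] [Fintype Γ] (p : ℕ) : Subgroup Γ where
  carrier := {g | Nat.Coprime (orderOf g) p}
  one_mem' := by simp [Nat.Coprime]
  mul_mem' := by
    intro a b ha hb
    exact Nat.Coprime.coprime_dvd_left
      (((Commute.all a b).orderOf_mul_dvd_lcm).trans
        (Nat.lcm_dvd (dvd_mul_right _ _) (dvd_mul_left _ _)))
      (Nat.Coprime.mul ha hb)
  inv_mem' := by
    intro a ha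
    simpa [orderOf_inv] using ha

/-- The maximal p-quotient of a finite abelian group. -/
abbrev maxPQuotient (Γ : Type) [CommGroup Γ] [Fintype Γ] (p : ℕ) :=
  Γ ⧸ primeToPart Γ p

/-- A group is p-elementary if it is the (internal) product of a p-group and a cyclic
group; elementary if p-elementary for some prime p. -/
def IsElementary (G : Type) [Group G] : Prop :=
  ∃ p : ℕ, p.Prime ∧ ∃ A B : Subgroup G, IsPGroup p A ∧ IsCyclic B ∧
    A ⊓ B = ⊥ ∧ A ⊔ B = ⊤

/-- The set S of pairs (I, D) with I ⊆ D ⊆ Γ, I nontrivial elementary, D/I cyclic. -/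
def SPairs (Γ : Type) [CommGroup Γ] [Fintype Γ] : Set (Subgroup Γ × Subgroup Γ) :=
  {x | x.1 ≠ ⊥ ∧ x.1 ≤ x.2 ∧ IsElementary ↥x.1 ∧
    IsCyclic (↥x.2 ⧸ Subgroup.subgroupOf x.1 x.2)}

/-- The set T of tuples (p, H, I*, D*) with p prime, H ⊆ Γ with Γ/H cyclic of order prime
to p, I* ⊆ D* ⊆ Γ_p with I* nontrivial and D*/I* cyclic. -/
def TSet (Γ : Type) [CommGroup Γ] [Fintype Γ] :
    Set (Σ q : ℕ, Subgroup Γ × Subgroup (maxPQuotient Γ q) × Subgroup (maxPQuotient Γ q)) :=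
  {x | x.1.Prime ∧ IsCyclic (Γ ⧸ x.2.1) ∧ Nat.Coprime (Nat.card (Γ ⧸ x.2.1)) x.1 ∧
    x.2.2.1 ≠ ⊥ ∧ x.2.2.1 ≤ x.2.2.2 ∧
    IsCyclic (↥x.2.2.2 ⧸ Subgroup.subgroupOf x.2.2.1 x.2.2.2)}

/-!
Duality pairs each subgroup `H` with a subgroup `dualSubgroup H ≃* Γ ⧸ H`, injectively in `H`;
applied to the kernel of `Γ → Γ_p` it also embeds `Γ_p` in `Γ` as a `p`-subgroup. So a tuple
`(p, H, I*, D*)` can be sent to `(I*, D* ⊔ dualSubgroup H)`, where `D*` is a `p`-group and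
`dualSubgroup H` is cyclic of order prime to `p`. As cyclic groups of coprime orders have a cyclic
product, the result lies in `S`; its first entry is a nontrivial `p`-group, and its second entry
splits uniquely into its two factors. This embeds `T` in `S″ = {(I, D) ∈ S | #I is a prime power}`.

If `Γ` is neither cyclic nor of prime-power order, it has a non-cyclic Sylow `p`-subgroup `P` and an
element `g` of prime order `q ≠ p`, and with `I = P × ⟨g⟩` the pair `(I, I)` lies in `S′` but not
in `S″`.
-/

section Lattice

variable {α : Type*} [Lattice α] [OrderBot α] [IsModularLattice α] {a b x y : α}

lemma sup_inf_eq_left_of_disjoint (hxy : Disjoint x y) (ha : a ≤ x) (hb : b ≤ y) :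
    (a ⊔ b) ⊓ x = a := by
  rw [sup_inf_assoc_of_le b ha, (hxy.symm.mono_left hb).eq_bot, sup_bot_eq]

lemma eq_and_eq_of_sup_eq_sup_of_disjoint {a' b' : α} (hxy : Disjoint x y)
    (ha : a ≤ x) (hb : b ≤ y) (ha' : a' ≤ x) (hb' : b' ≤ y) (h : a ⊔ b = a' ⊔ b') :
    a = a' ∧ b = b' := by
  constructor
  · rw [← sup_inf_eq_left_of_disjoint hxy ha hb, h, sup_inf_eq_left_of_disjoint hxy ha' hb']
  · rw [← sup_inf_eq_left_of_disjoint hxy.symm hb ha, sup_comm, h, sup_comm,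
      sup_inf_eq_left_of_disjoint hxy.symm hb' ha']

end Lattice

section CyclicSubgroups

lemma zpowers_sup_zpowers_of_coprime {G : Type*} [CommGroup G] {a b : G}
    (h : (orderOf a).Coprime (orderOf b)) :
    Subgroup.zpowers a ⊔ Subgroup.zpowers b = Subgroup.zpowers (a * b) := by
  have left_mem {a b : G} (h : (orderOf a).Coprime (orderOf b)) :
      a ∈ Subgroup.zpowers (a * b) := by
    have hpow : (a * b) ^ orderOf b = a ^ orderOf b := by
      rw [mul_pow, pow_orderOf_eq_one, mul_one]
    have hmem : a ∈ Subgroup.zpowers (a ^ orderOf b) := mem_zpowers_pow_iff.2 h.symm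
    rw [← hpow] at hmem
    exact Subgroup.zpowers_le.2 (Subgroup.npow_mem_zpowers _ _) hmem
  apply le_antisymm
  · rw [sup_le_iff, Subgroup.zpowers_le, Subgroup.zpowers_le]
    exact ⟨left_mem h, mul_comm a b ▸ left_mem h.symm⟩
  · exact Subgroup.zpowers_le.2
      (Subgroup.mul_mem_sup (Subgroup.mem_zpowers a) (Subgroup.mem_zpowers b))

lemma isCyclic_quotient_subgroupOf_iff {G : Type*} [CommGroup G] {I D : Subgroup G} (h : I ≤ D) :
    IsCyclic (D ⧸ I.subgroupOf D) ↔ ∃ d, D = I ⊔ Subgroup.zpowers d := by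
  have generates_iff (d : D) : Subgroup.zpowers (d : D ⧸ I.subgroupOf D) = ⊤ ↔
      D = I ⊔ Subgroup.zpowers (d : G) := by
    have preimage_eq : (Subgroup.zpowers (d : D ⧸ I.subgroupOf D)).comap (QuotientGroup.mk' _) =
        Subgroup.zpowers d ⊔ I.subgroupOf D := by
      rw [← QuotientGroup.mk'_apply, ← MonoidHom.map_zpowers, Subgroup.comap_map_eq,
        QuotientGroup.ker_mk']
    rw [← (Subgroup.comap_injective (QuotientGroup.mk'_surjective _)).eq_iff, preimage_eq,
      Subgroup.comap_top, ← (Subgroup.map_injective D.subtype_injective).eq_iff, Subgroup.map_sup,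
      MonoidHom.map_zpowers, Subgroup.subgroupOf_map_subtype, inf_of_le_left h,
      ← MonoidHom.range_eq_map, Subgroup.range_subtype, Subgroup.subtype_apply, sup_comm, eq_comm]
  rw [isCyclic_iff_exists_zpowers_eq_top]
  constructor
  · rintro ⟨x, hx⟩
    obtain ⟨d, rfl⟩ := QuotientGroup.mk_surjective x
    exact ⟨d, (generates_iff d).1 hx⟩
  · rintro ⟨d, hd⟩
    have hdD : d ∈ D := hd ▸ Subgroup.mem_sup_right (Subgroup.mem_zpowers d)
    exact ⟨_, (generates_iff ⟨d, hdD⟩).2 hd⟩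

lemma isCyclic_quotient_subgroupOf_map {G G' : Type*} [CommGroup G] [CommGroup G'] (f : G →* G')
    {I D : Subgroup G} (h : I ≤ D) (hDI : IsCyclic (D ⧸ I.subgroupOf D)) :
    IsCyclic (D.map f ⧸ (I.map f).subgroupOf (D.map f)) := by
  obtain ⟨d, hd⟩ := (isCyclic_quotient_subgroupOf_iff h).1 hDI
  refine (isCyclic_quotient_subgroupOf_iff (Subgroup.map_mono h)).2 ⟨f d, ?_⟩
  rw [← MonoidHom.map_zpowers, ← Subgroup.map_sup, ← hd]

lemma isCyclic_quotient_subgroupOf_sup {G : Type*} [CommGroup G] {I D C : Subgroup G} (h : I ≤ D)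
    (hDI : IsCyclic (D ⧸ I.subgroupOf D)) (hC : IsCyclic C)
    (hDC : (Nat.card D).Coprime (Nat.card C)) :
    IsCyclic (↥(D ⊔ C) ⧸ I.subgroupOf (D ⊔ C)) := by
  obtain ⟨d, hd⟩ := (isCyclic_quotient_subgroupOf_iff h).1 hDI
  obtain ⟨c, rfl⟩ := (Subgroup.isCyclic_iff_exists_zpowers_eq_top C).1 hC
  have hdD : d ∈ D := hd ▸ Subgroup.mem_sup_right (Subgroup.mem_zpowers d)
  have hdc : (orderOf d).Coprime (orderOf c) :=
    Nat.card_zpowers c ▸ hDC.coprime_dvd_left (D.orderOf_dvd_natCard hdD)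
  refine (isCyclic_quotient_subgroupOf_iff (h.trans le_sup_left)).2 ⟨d * c, ?_⟩
  rw [← zpowers_sup_zpowers_of_coprime hdc, ← sup_assoc, ← hd]

end CyclicSubgroups

section Duality

variable {G : Type*} [CommGroup G] [Finite G]

/-- The order-reversing bijection on the subgroups of a finite abelian group `G` that sends `H` to
the characters trivial on `H`, these being regarded as elements of `G` through a chosen isomorphism
of `G →* ℂˣ` with `G`. -/
noncomputable def dualSubgroup : Subgroup G ≃o (Subgroup G)ᵒᵈ :=
  (CommGroup.subgroupOrderIsoSubgroupMonoidHom G ℂ).trans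
    (CommGroup.monoidHom_mulEquiv_of_hasEnoughRootsOfUnity G ℂ).some.mapSubgroup.dual

lemma nonempty_dualSubgroup_mulEquiv_quotient (H : Subgroup G) :
    Nonempty ((dualSubgroup H).ofDual ≃* G ⧸ H) := by
  let e := (CommGroup.monoidHom_mulEquiv_of_hasEnoughRootsOfUnity G ℂ).some
  exact ⟨((e.subgroupMap (MonoidHom.domRestrictHom H ℂˣ).ker).symm.trans
    (MonoidHom.domRestrictHomKerEquiv ℂˣ H)).trans
      (CommGroup.monoidHom_mulEquiv_of_hasEnoughRootsOfUnity (G ⧸ H) ℂ).some⟩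

lemma exists_injective_quotient_monoidHom (N : Subgroup G) :
    ∃ f : G ⧸ N →* G, Function.Injective f := by
  obtain ⟨e⟩ := nonempty_dualSubgroup_mulEquiv_quotient N
  exact ⟨(Subgroup.subtype _).comp e.symm.toMonoidHom,
    (Subgroup.subtype_injective _).comp e.symm.injective⟩

/-- A chosen embedding of a quotient of a finite abelian group `G` in `G`. -/
noncomputable def quotientEmbedding (N : Subgroup G) : G ⧸ N →* G :=
  (exists_injective_quotient_monoidHom N).choose

lemma quotientEmbedding_injective (N : Subgroup G) : Function.Injective (quotientEmbedding N) :=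
  (exists_injective_quotient_monoidHom N).choose_spec

lemma map_quotientEmbedding_ne_bot {N : Subgroup G} {X : Subgroup (G ⧸ N)} (hX : X ≠ ⊥) :
    X.map (quotientEmbedding N) ≠ ⊥ :=
  (Subgroup.map_eq_bot_iff_of_injective X (quotientEmbedding_injective N)).not.2 hX

end Duality

section PGroups

variable {G : Type*} [Group G] {P : Subgroup G} {p q : ℕ}

lemma isPrimePow_card_of_isPGroup [Finite P] (hp : p.Prime) (hP : IsPGroup p P) (hne : P ≠ ⊥) :
    IsPrimePow (Nat.card P) := by
  have : Fact p.Prime := ⟨hp⟩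
  obtain ⟨n, hn, hcard⟩ := hP.nontrivial_iff_card.1 (P.nontrivial_iff_ne_bot.2 hne)
  exact hcard ▸ hp.isPrimePow.pow hn.ne'

lemma prime_eq_of_isPGroup_of_isPGroup (hp : p.Prime) (hq : q.Prime) (hpP : IsPGroup p P)
    (hqP : IsPGroup q P) (hne : P ≠ ⊥) : p = q := by
  by_contra hpq
  have : Fact p.Prime := ⟨hp⟩
  have : Fact q.Prime := ⟨hq⟩
  exact hne (disjoint_self.1 (IsPGroup.disjoint_of_ne p q hpq P P hpP hqP))

lemma coprime_card_of_isPGroup [Finite P] {n : ℕ} (hp : p.Prime) (hP : IsPGroup p P)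
    (hn : n.Coprime p) : (Nat.card P).Coprime n := by
  have : Fact p.Prime := ⟨hp⟩
  obtain ⟨k, hk⟩ := IsPGroup.iff_card.1 hP
  exact hk ▸ (hn.pow_right k).symm

end PGroups

section PrimeToPart

variable {Γ : Type} [CommGroup Γ] [Fintype Γ] {p : ℕ}

lemma isPGroup_maxPQuotient (hp : p.Prime) : IsPGroup p (maxPQuotient Γ p) := by
  rintro ⟨g⟩
  refine ⟨(orderOf g).factorization p, (QuotientGroup.eq_one_iff _).2 ?_⟩
  have hdvd : orderOf (g ^ p ^ (orderOf g).factorization p) ∣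
      orderOf g / p ^ (orderOf g).factorization p := by
    apply orderOf_dvd_of_pow_eq_one
    rw [← pow_mul, Nat.ordProj_mul_ordCompl_eq_self, pow_orderOf_eq_one]
  exact (Nat.coprime_ordCompl hp (orderOf_pos g).ne').symm.coprime_dvd_left hdvd

lemma le_primeToPart {K : Subgroup Γ} (hK : (Nat.card K).Coprime p) : K ≤ primeToPart Γ p :=
  fun _ hg ↦ hK.coprime_dvd_left (K.orderOf_dvd_natCard hg)

lemma disjoint_primeToPart {P : Subgroup Γ} (hP : IsPGroup p P) :
    Disjoint P (primeToPart Γ p) := by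
  rw [Subgroup.disjoint_def]
  intro g hgP hg
  have hcop : (orderOf g).Coprime (orderOf g) := by
    simpa using hP.orderOf_coprime (Nat.Coprime.symm hg) ⟨g, hgP⟩
  exact orderOf_eq_one_iff.1 ((Nat.coprime_self _).1 hcop)

end PrimeToPart

section Elementary

lemma isElementary_of_isPGroup {G : Type} [Group G] {p : ℕ} (hp : p.Prime) (hG : IsPGroup p G) :
    IsElementary G :=
  ⟨p, hp, ⊤, ⊥, hG.to_subgroup ⊤, inferInstance, inf_bot_eq ⊤, sup_bot_eq ⊤⟩

lemma isElementary_sup {G : Type} [Group G] {p : ℕ} (hp : p.Prime) {A B : Subgroup G}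
    (hA : IsPGroup p A) (hB : IsCyclic B) (hAB : Disjoint A B) :
    IsElementary ↥(A ⊔ B) := by
  refine ⟨p, hp, A.subgroupOf (A ⊔ B), B.subgroupOf (A ⊔ B), ?_, ?_, ?_, ?_⟩
  · exact hA.of_equiv (Subgroup.subgroupOfEquivOfLe le_sup_left).symm
  · exact (Subgroup.subgroupOfEquivOfLe le_sup_right).isCyclic.2 hB
  · rw [Subgroup.subgroupOf, Subgroup.subgroupOf, ← Subgroup.comap_inf, hAB.eq_bot]
    exact Subgroup.bot_subgroupOf _
  · exact (Subgroup.codisjoint_subgroupOf_sup A B).eq_top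

lemma exists_isPGroup_not_isCyclic {G : Type*} [CommGroup G] [Finite G] (hG : ¬ IsCyclic G) :
    ∃ p : ℕ, p.Prime ∧ ∃ P : Subgroup G, IsPGroup p P ∧ ¬ IsCyclic P := by
  by_contra! h
  have : IsZGroup G := ⟨fun p hp P ↦ h p hp P P.isPGroup'⟩
  exact hG inferInstance

lemma exists_prime_ne_dvd_of_not_isPrimePow {n p : ℕ} (hn : ¬ IsPrimePow n) (hp : p.Prime)
    (hpn : p ∣ n) : ∃ q : ℕ, q.Prime ∧ q ≠ p ∧ q ∣ n := by
  by_contra! h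
  exact hn <| isPrimePow_iff_unique_prime_dvd.2
    ⟨p, ⟨hp, hpn⟩, fun q ⟨hq, hqn⟩ ↦ by_contra fun hqp ↦ h q hq hqp hqn⟩

lemma exists_isElementary_not_isCyclic_not_isPrimePow {Γ : Type} [CommGroup Γ] [Finite Γ]
    (hnc : ¬ IsCyclic Γ) (hnpp : ¬ IsPrimePow (Nat.card Γ)) :
    ∃ I : Subgroup Γ, IsElementary I ∧ ¬ IsCyclic I ∧ ¬ IsPrimePow (Nat.card I) := by
  obtain ⟨p, hp, P, hP, hPnc⟩ := exists_isPGroup_not_isCyclic hnc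
  have : Fact p.Prime := ⟨hp⟩
  have hpP : p ∣ Nat.card P :=
    hP.card_eq_or_dvd.resolve_left fun h ↦
      have := (Nat.card_eq_one_iff_unique.1 h).1
      hPnc inferInstance
  obtain ⟨q, hq, hqp, hqΓ⟩ :=
    exists_prime_ne_dvd_of_not_isPrimePow hnpp hp (hpP.trans (Subgroup.card_subgroup_dvd_card _))
  have : Fact q.Prime := ⟨hq⟩
  obtain ⟨g, hg⟩ := exists_prime_orderOf_dvd_card' q hqΓ
  let Q := Subgroup.zpowers g
  have hQ : Nat.card Q = q := (Nat.card_zpowers g).trans hg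
  have hPQ : Disjoint P Q :=
    IsPGroup.disjoint_of_ne p q hqp.symm _ _ hP (IsPGroup.of_card (n := 1) (by simpa using hQ))
  have hP_le : P ≤ P ⊔ Q := le_sup_left
  refine ⟨P ⊔ Q, isElementary_sup hp hP inferInstance hPQ, fun hc ↦ ?_, fun hpp ↦ ?_⟩
  · exact hPnc (Subgroup.isCyclic_of_le hP_le)
  · have hp_dvd : p ∣ Nat.card ↥(P ⊔ Q) := hpP.trans (Subgroup.card_dvd_of_le hP_le)
    have hq_dvd : q ∣ Nat.card ↥(P ⊔ Q) :=
      hQ ▸ Subgroup.card_dvd_of_le (le_sup_right : Q ≤ P ⊔ Q)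
    exact hqp ((isPrimePow_iff_unique_prime_dvd.1 hpp).unique ⟨hq, hq_dvd⟩ ⟨hp, hp_dvd⟩)

end Elementary

section Comparison

variable {Γ : Type} [CommGroup Γ] [Fintype Γ]

/-- The set `S″` of the pairs `(I, D) ∈ S` with `#I` a prime power. -/
def primePowSPairs (Γ : Type) [CommGroup Γ] [Fintype Γ] : Set (Subgroup Γ × Subgroup Γ) :=
  {x ∈ SPairs Γ | IsPrimePow (Nat.card x.1)}

/-- The map `(p, H, I*, D*) ↦ (I*, D* ⊔ dualSubgroup H)`, with `Γ_p` regarded as a subgroup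
of `Γ`; it embeds `T` in `S″`. -/
noncomputable def toSPair
    (x : Σ q : ℕ, Subgroup Γ × Subgroup (maxPQuotient Γ q) × Subgroup (maxPQuotient Γ q)) :
    Subgroup Γ × Subgroup Γ :=
  (x.2.2.1.map (quotientEmbedding (primeToPart Γ x.1)),
    x.2.2.2.map (quotientEmbedding (primeToPart Γ x.1)) ⊔ (dualSubgroup x.2.1).ofDual)

lemma isPGroup_map_quotientEmbedding {p : ℕ} (hp : p.Prime) (X : Subgroup (maxPQuotient Γ p)) :
    IsPGroup p (X.map (quotientEmbedding (primeToPart Γ p))) :=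
  ((isPGroup_maxPQuotient hp).to_subgroup X).map _

lemma dualSubgroup_le_primeToPart {p : ℕ} {H : Subgroup Γ} (hH : (Nat.card (Γ ⧸ H)).Coprime p) :
    (dualSubgroup H).ofDual ≤ primeToPart Γ p := by
  obtain ⟨e⟩ := nonempty_dualSubgroup_mulEquiv_quotient H
  exact le_primeToPart (Nat.card_congr e.toEquiv ▸ hH)

lemma mapsTo_toSPair : Set.MapsTo toSPair (TSet Γ) (primePowSPairs Γ) := by
  rintro ⟨p, H, I, D⟩ ⟨hp, hH, hHp, hI, hID, hDI⟩
  dsimp only at *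
  let f := quotientEmbedding (primeToPart Γ p)
  have hfI : IsPGroup p (I.map f) := isPGroup_map_quotientEmbedding hp I
  have hfI_ne : I.map f ≠ ⊥ := map_quotientEmbedding_ne_bot hI
  have hfID : I.map f ≤ D.map f := Subgroup.map_mono hID
  obtain ⟨e⟩ := nonempty_dualSubgroup_mulEquiv_quotient H
  have hcop : (Nat.card (D.map f)).Coprime (Nat.card (dualSubgroup H).ofDual) := by
    rw [Nat.card_congr e.toEquiv]
    exact coprime_card_of_isPGroup hp (isPGroup_map_quotientEmbedding hp D) hHp
  have hcyclic := isCyclic_quotient_subgroupOf_sup hfID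
    (isCyclic_quotient_subgroupOf_map f hID hDI) (e.isCyclic.2 hH) hcop
  have hS : (I.map f, D.map f ⊔ (dualSubgroup H).ofDual) ∈ SPairs Γ :=
    ⟨hfI_ne, hfID.trans le_sup_left, isElementary_of_isPGroup hp hfI, hcyclic⟩
  exact ⟨hS, isPrimePow_card_of_isPGroup hp hfI hfI_ne⟩

lemma injOn_toSPair : Set.InjOn toSPair (TSet Γ) := by
  rintro ⟨p, H, I, D⟩ ⟨hp, -, hH, hI, -⟩ ⟨p', H', I', D'⟩ ⟨hp', -, hH', -⟩ h
  dsimp only at *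
  obtain ⟨hfst, hsnd⟩ := Prod.mk.inj h
  dsimp only at hfst hsnd
  obtain rfl : p = p' :=
    prime_eq_of_isPGroup_of_isPGroup hp hp' (isPGroup_map_quotientEmbedding hp I)
      (hfst ▸ isPGroup_map_quotientEmbedding hp' I') (map_quotientEmbedding_ne_bot hI)
  have map_injective := Subgroup.map_injective (quotientEmbedding_injective (primeToPart Γ p))
  have hdisj : Disjoint ((⊤ : Subgroup (maxPQuotient Γ p)).map
      (quotientEmbedding (primeToPart Γ p))) (primeToPart Γ p) :=
    disjoint_primeToPart (isPGroup_map_quotientEmbedding hp ⊤)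
  obtain ⟨hD, hHH'⟩ := eq_and_eq_of_sup_eq_sup_of_disjoint hdisj
    (Subgroup.map_mono le_top) (dualSubgroup_le_primeToPart hH)
    (Subgroup.map_mono le_top) (dualSubgroup_le_primeToPart hH') hsnd
  obtain rfl : I = I' := map_injective hfst
  obtain rfl : D = D' := map_injective hD
  obtain rfl : H = H' := dualSubgroup.injective hHH'
  rfl

lemma ncard_TSet_le_ncard_primePowSPairs : (TSet Γ).ncard ≤ (primePowSPairs Γ).ncard :=
  Set.ncard_le_ncard_of_injOn toSPair mapsTo_toSPair injOn_toSPair (Set.toFinite _)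

lemma mk_self_mem_SPairs {I : Subgroup Γ} (hI : I ≠ ⊥) (hel : IsElementary I) :
    (I, I) ∈ SPairs Γ :=
  ⟨hI, le_rfl, hel, (isCyclic_quotient_subgroupOf_iff le_rfl).2 ⟨1, by simp⟩⟩

lemma primePowSPairs_ssubset (hnc : ¬ IsCyclic Γ) (hnpp : ¬ IsPrimePow (Nat.card Γ)) :
    primePowSPairs Γ ⊂ {x ∈ SPairs Γ | ¬ IsCyclic x.2 ∨ IsPrimePow (Nat.card x.1)} := by
  obtain ⟨I, hel, hInc, hInpp⟩ := exists_isElementary_not_isCyclic_not_isPrimePow hnc hnpp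
  have hI : I ≠ ⊥ := by
    rintro rfl
    exact hInc inferInstance
  refine (Set.ssubset_iff_of_subset fun x hx ↦ And.intro hx.1 (.inr hx.2)).2 ⟨(I, I), ?_, ?_⟩
  · exact ⟨mk_self_mem_SPairs hI hel, .inl hInc⟩
  · exact fun h ↦ hInpp h.2

end Comparison

/-- If the finite abelian group Γ is neither cyclic nor of prime-power
order, then #S′ > #T, where S′ = {(I,D) ∈ S : D non-cyclic or #I a prime power}. -/
theorem stmt12 (Γ : Type) [CommGroup Γ] [Fintype Γ]
    (hnc : ¬ IsCyclic Γ) (hnpp : ¬ IsPrimePow (Nat.card Γ)) :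
    Nat.card {x // x ∈ SPairs Γ ∧ (¬ IsCyclic x.2 ∨ IsPrimePow (Nat.card x.1))} >
      Nat.card {x // x ∈ TSet Γ} :=
  ncard_TSet_le_ncard_primePowSPairs.trans_lt
    (Set.ncard_lt_ncard (primePowSPairs_ssubset hnc hnpp) (Set.toFinite _))
end
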